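/- Let ℓ ∈ ℕ and let x = (x₁,…,x_ℓ) and y = (y₁,…,y_ℓ) be zero-mean jointly Gaussian real random vectors with K_x positive definite. Then the following are equivalent: (i) for every k = 1,…,ℓ−1, the random vector (y₁,…,y_k) is conditionally independent of (x_{k+1},…,x_ℓ) given (x₁,…,x_k); (ii) the matrix K_{yx} K_x^{−1} is lower triangular, i.e., (K_{yx} K_x^{−1})_{j,i} = 0 whenever i > j. -/

import Mathlib

/-!
Let `s` select a subvector `z = (x_{s m})_m` of `x`. With `C = K_{yz} K_z⁻¹` the residual `y - C z`
is uncorrelated with `z`, hence independent of it by Gaussianity (`indepFun_residual`), and so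
`E[y | z] = C z` (`condExp_eq_of_indepFun`). For `z = x` one has `C = A := K_{yx} K_x⁻¹`.

If `A` is lower triangular, then `(y₁, …, y_k)` is a function of `(x₁, …, x_k)` and of the residual
`y - A x`, which is independent of all of `x`; this gives the conditional independence
(`condIndepFun_of_indepFun_prodMk`).

Conversely, let `j < i`. Conditional independence for `k = j` (in one-based numbering) gives
`E[y_j | x] = E[y_j | x₁, …, x_j]` (`condExp_prodMk_eq_of_condIndepFun`). Both sides are linear
forms in `x`, the left one with coefficients `A_{j,·}`, the right one without `x_i`. As `K_x` is
positive definite, almost surely equal linear forms in `x` have equal coefficients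
(`eq_zero_of_ae_eq_zero`), so `A_{j,i} = 0`.
-/

open MeasureTheory ProbabilityTheory

/-- Two random vectors `x, y : Ω → (Fin n → ℝ)` are jointly Gaussian if every real linear
combination of their components has a Gaussian distribution. -/
def IsJointlyGaussianPair {Ω : Type*} [MeasurableSpace Ω] (μ : Measure Ω) {n : ℕ}
    (x y : Ω → Fin n → ℝ) : Prop :=
  ∀ a b : Fin n → ℝ, ∃ (m : ℝ) (v : NNReal),
    Measure.map (fun ω => (∑ i, a i * x ω i) + ∑ i, b i * y ω i) μ = gaussianReal m v

/-- If `e` is independent of `Z`, then the conditional law of `φ (h Z, e)` given `Z = z` is the law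
of `φ (h z, e)`; in particular it depends on `z` through `h z` only. -/
lemma condDistrib_of_indepFun {Ω α β γ δ : Type*} [MeasurableSpace Ω] [MeasurableSpace α]
    [MeasurableSpace β] [StandardBorelSpace β] [Nonempty β] [MeasurableSpace γ] [MeasurableSpace δ]
    {μ : Measure Ω} [IsProbabilityMeasure μ] {Z : Ω → α} {e : Ω → δ} {h : α → γ} {φ : γ × δ → β}
    (hZ : Measurable Z) (he : Measurable e) (hh : Measurable h) (hφ : Measurable φ)
    (hind : IndepFun Z e μ) :
    condDistrib (fun ω => φ (h (Z ω), e ω)) Z μ =ᵐ[μ.map Z]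
      ((Kernel.id ×ₖ Kernel.const γ (μ.map e)).map φ).comap h hh := by
  have : IsProbabilityMeasure (μ.map e) := Measure.isProbabilityMeasure_map he.aemeasurable
  have : IsProbabilityMeasure (μ.map Z) := Measure.isProbabilityMeasure_map hZ.aemeasurable
  have : IsMarkovKernel ((Kernel.id ×ₖ Kernel.const γ (μ.map e)).map φ) :=
    Kernel.IsMarkovKernel.map _ hφ
  refine condDistrib_ae_eq_of_measure_eq_compProd Z (by fun_prop) ?_
  refine Measure.ext_of_lintegral _ fun f hf => ?_
  have hprod := (indepFun_iff_map_prod_eq_prod_map_map hZ.aemeasurable he.aemeasurable).1 hind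
  rw [Measure.lintegral_compProd hf, lintegral_map hf (by fun_prop)]
  have h1 : ∫⁻ ω, f (Z ω, φ (h (Z ω), e ω)) ∂μ
      = ∫⁻ p, f (p.1, φ (h p.1, p.2)) ∂(μ.map fun ω => (Z ω, e ω)) := by
    rw [lintegral_map (by fun_prop) (by fun_prop)]
  rw [h1, hprod, lintegral_prod _ (by fun_prop)]
  refine lintegral_congr fun a => ?_
  have hfa : Measurable fun q : γ × δ => f (a, φ q) := by fun_prop
  rw [Kernel.comap_apply, Kernel.map_apply _ hφ, Kernel.prod_apply, Kernel.id_apply,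
    Kernel.const_apply, lintegral_map (by fun_prop) hφ, Measure.dirac_prod,
    lintegral_map hfa (by fun_prop)]

/-- If `e` is independent of the pair `(k, g)`, then any function of `(k, e)` is conditionally
independent of `g` given `k`. -/
lemma condIndepFun_of_indepFun_prodMk {Ω β β' γ δ : Type*} [MeasurableSpace Ω]
    [StandardBorelSpace Ω] [MeasurableSpace β] [StandardBorelSpace β] [Nonempty β]
    [MeasurableSpace β'] [StandardBorelSpace β'] [Nonempty β']
    [MeasurableSpace γ] [MeasurableSpace δ]
    {μ : Measure Ω} [IsProbabilityMeasure μ] {k : Ω → γ} {g : Ω → β'} {e : Ω → δ} {φ : γ × δ → β}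
    (hk : Measurable k) (hg : Measurable g) (he : Measurable e) (hφ : Measurable φ)
    (hind : IndepFun (fun ω => (k ω, g ω)) e μ) :
    (fun ω => φ (k ω, e ω)) ⟂ᵢ[k, hk; μ] g := by
  refine CondIndepFun.symm ?_
  rw [condIndepFun_iff_condDistrib_prod_ae_eq_prodMkRight (by fun_prop) hg hk]
  have h1 := condDistrib_of_indepFun (Z := fun ω => (k ω, g ω)) (h := Prod.fst)
    (hk.prodMk hg) he measurable_fst hφ hind
  have h2 := condDistrib_of_indepFun (Z := k) (h := id) hk he measurable_id hφ
    (hind.comp measurable_fst measurable_id)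
  have h3 : μ.map k = (μ.map (fun ω => (k ω, g ω))).map Prod.fst := by
    rw [Measure.map_map measurable_fst (hk.prodMk hg)]; rfl
  rw [h3] at h2
  filter_upwards [h1, ae_of_ae_map measurable_fst.aemeasurable h2] with p hp1 hp2
  rw [hp1, Kernel.prodMkRight_apply]
  exact hp2.symm

/-- A decomposition `f = p(Z) + e` with `e` centered and independent of `Z` computes `E[f | Z]`. -/
lemma condExp_eq_of_indepFun {Ω γ : Type*} [MeasurableSpace Ω] [mγ : MeasurableSpace γ]
    {μ : Measure Ω} [IsProbabilityMeasure μ] {f : Ω → ℝ} {Z : Ω → γ} {p : γ → ℝ}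
    (hf : Measurable f) (hfi : Integrable f μ)
    (hZ : Measurable Z) (hp : Measurable p) (hpi : Integrable (fun ω => p (Z ω)) μ)
    (hmean : ∫ ω, (f ω - p (Z ω)) ∂μ = 0)
    (hind : IndepFun (fun ω => f ω - p (Z ω)) Z μ) :
    μ[f | mγ.comap Z] =ᵐ[μ] fun ω => p (Z ω) := by
  have hle : mγ.comap Z ≤ ‹MeasurableSpace Ω› := hZ.comap_le
  have hem : Measurable (fun ω => f ω - p (Z ω)) := by fun_prop
  have h1 : μ[(fun ω => f ω - p (Z ω)) | mγ.comap Z] =ᵐ[μ] fun _ => 0 := by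
    have := condExp_indep_eq (μ := μ) hem.comap_le hle
      (comap_measurable (fun ω => f ω - p (Z ω))).stronglyMeasurable hind
    rwa [hmean] at this
  have h2 : μ[(fun ω => p (Z ω)) | mγ.comap Z] = fun ω => p (Z ω) :=
    condExp_of_stronglyMeasurable hle
      (hp.comp (comap_measurable Z)).stronglyMeasurable hpi
  have h3 := condExp_sub hfi hpi (mγ.comap Z)
  rw [h2] at h3
  filter_upwards [h1, h3] with ω a b
  have : (μ[f | mγ.comap Z]) ω - p (Z ω) = 0 := by rw [← a]; exact b.symm
  linarith

/-- Under conditional independence of `f` and `g` given `k`, the extra conditioning on `g` does not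
change the conditional expectation of `f`. -/
lemma condExp_prodMk_eq_of_condIndepFun {Ω β γ : Type*} [MeasurableSpace Ω]
    [StandardBorelSpace Ω] [mβ : MeasurableSpace β] [StandardBorelSpace β] [Nonempty β]
    [mγ : MeasurableSpace γ] {μ : Measure Ω} [IsProbabilityMeasure μ]
    {k : Ω → γ} {g : Ω → β} {f : Ω → ℝ} (hk : Measurable k) (hg : Measurable g)
    (hf : Measurable f) (hfi : Integrable f μ) (h : f ⟂ᵢ[k, hk; μ] g) :
    μ[f | MeasurableSpace.comap (fun ω => (k ω, g ω)) inferInstance] =ᵐ[μ] μ[f | mγ.comap k] := by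
  have h0 := (condIndepFun_iff_condDistrib_prod_ae_eq_prodMkRight hf hg hk).1 h.symm
  filter_upwards [condExp_ae_eq_integral_condDistrib' (hk.prodMk hg) hfi,
    condExp_ae_eq_integral_condDistrib' hk hfi,
    ae_of_ae_map (hk.prodMk hg).aemeasurable h0] with ω a b c
  rw [a, b, c, Kernel.prodMkRight_apply]

/-- By definition all `a · x + b · y` are Gaussian, and every continuous linear form on the product
space is of this shape. -/
lemma IsJointlyGaussianPair.hasGaussianLaw {Ω : Type*} [MeasurableSpace Ω] {μ : Measure Ω}
    {n : ℕ} {x y : Ω → Fin n → ℝ} (hmx : Measurable x) (hmy : Measurable y)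
    (hG : IsJointlyGaussianPair μ x y) : HasGaussianLaw (fun ω => (x ω, y ω)) μ := by
  refine ⟨⟨fun L => ?_⟩⟩
  obtain ⟨m, v, h⟩ := hG (fun i => L (Pi.single i 1, 0)) (fun i => L (0, Pi.single i 1))
  have hL : ∀ p : (Fin n → ℝ) × (Fin n → ℝ), L p =
      (∑ i, L (Pi.single i 1, 0) * p.1 i) + ∑ i, L (0, Pi.single i 1) * p.2 i := by
    intro p
    have h1 := (L.comp (.inl ℝ _ _)).toLinearMap.pi_apply_eq_sum_univ p.1
    have h2 := (L.comp (.inr ℝ _ _)).toLinearMap.pi_apply_eq_sum_univ p.2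
    have hp : p = (p.1, 0) + (0, p.2) := by simp
    rw [hp, map_add]
    simp only [ContinuousLinearMap.coe_coe, ContinuousLinearMap.comp_apply,
      ContinuousLinearMap.inl_apply, ContinuousLinearMap.inr_apply, smul_eq_mul] at h1 h2
    rw [h1, h2]
    have hsingle : ∀ i : Fin n, (fun j => if i = j then (1 : ℝ) else 0) = Pi.single i 1 :=
      fun i => by ext j; simp [Pi.single_apply, eq_comm]
    simp [hsingle, mul_comm]
  have hm : (μ.map (fun ω => (x ω, y ω))).map L = gaussianReal m v := by
    rw [Measure.map_map (by fun_prop) (by fun_prop), ← h]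
    congr 1
    ext ω
    simp [hL (x ω, y ω)]
  have e1 : ∫ p, L p ∂(μ.map (fun ω => (x ω, y ω))) = m := by
    have := integral_id_gaussianReal (μ := m) (v := v)
    rw [← hm, integral_map (by fun_prop) (by fun_prop)] at this
    exact this
  have e2 : Var[L; μ.map (fun ω => (x ω, y ω))] = v := by
    have := variance_id_gaussianReal (μ := m) (v := v)
    rw [← hm, variance_map (by fun_prop) (by fun_prop)] at this
    exact this
  rw [hm, e1, e2, Real.toNNReal_coe]

section Regression

open scoped Matrix

variable {Ω : Type*} [MeasurableSpace Ω] {μ : Measure Ω} {ℓ : ℕ}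
  {x y : Ω → Fin ℓ → ℝ} {Kx Kyx : Matrix (Fin ℓ) (Fin ℓ) ℝ}

/-- The regression residual of `y` on the subvector `(x_{s m})_m` is uncorrelated with, hence (by
Gaussianity) independent of, that subvector. -/
lemma indepFun_residual [IsProbabilityMeasure μ] (hmx : Measurable x) (hmy : Measurable y)
    (hG : IsJointlyGaussianPair μ x y) (hx0 : ∀ i, ∫ ω, x ω i ∂μ = 0)
    (hKx : Kx = Matrix.of fun i j => ∫ ω, x ω i * x ω j ∂μ)
    (hKyx : Kyx = Matrix.of fun i j => ∫ ω, y ω i * x ω j ∂μ)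
    (hKxPD : Kx.PosDef) {k : ℕ} (s : Fin k → Fin ℓ) (hs : Function.Injective s) :
    IndepFun (fun ω i => y ω i -
        ∑ m, (Kyx.submatrix id s * (Kx.submatrix s s)⁻¹) i m * x ω (s m))
      (fun ω m => x ω (s m)) μ := by
  set C := Kyx.submatrix id s * (Kx.submatrix s s)⁻¹ with hC
  have hxy := hG.hasGaussianLaw hmx hmy
  have hxL : ∀ i, MemLp (fun ω => x ω i) 2 μ := fun i =>
    (hxy.fst.map_fun (.proj i)).memLp_two
  have hyL : ∀ i, MemLp (fun ω => y ω i) 2 μ := fun i =>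
    (hxy.snd.map_fun (.proj i)).memLp_two
  let T : ((Fin ℓ → ℝ) × (Fin ℓ → ℝ)) →L[ℝ] ((Fin ℓ → ℝ) × (Fin k → ℝ)) :=
    LinearMap.toContinuousLinearMap
      { toFun := fun p => (fun i => p.2 i - ∑ m, C i m * p.1 (s m), fun m => p.1 (s m))
        map_add' := fun p q => by
          ext <;> simp [mul_add, Finset.sum_add_distrib]; ring
        map_smul' := fun c p => by
          ext <;> simp [mul_sub, Finset.mul_sum, mul_left_comm] }
  have hT : HasGaussianLaw (fun ω => (fun i => y ω i - ∑ m, C i m * x ω (s m),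
      fun m => x ω (s m))) μ := hxy.map_fun T
  refine HasGaussianLaw.indepFun_of_covariance_eval
    (X := fun i ω => y ω i - ∑ m, C i m * x ω (s m)) (Y := fun m ω => x ω (s m)) hT
    fun i j => ?_
  have hsumL : MemLp (fun ω => ∑ m, C i m * x ω (s m)) 2 μ :=
    memLp_finsetSum _ fun m _ => (hxL (s m)).const_mul _
  have hmul : ∀ a b, Integrable (fun ω => x ω a * x ω b) μ := fun a b =>
    (hxL a).integrable_mul (hxL b)
  have hdiffL : MemLp (fun ω => y ω i - ∑ m, C i m * x ω (s m)) 2 μ := (hyL i).sub hsumL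
  rw [covariance_eq_sub hdiffL (hxL (s j)), hx0, mul_zero, sub_zero]
  have hCK : C * Kx.submatrix s s = Kyx.submatrix id s := by
    rw [hC, Matrix.mul_assoc, Matrix.nonsing_inv_mul, Matrix.mul_one]
    exact (hKxPD.submatrix hs).det_pos.ne'.isUnit
  have hij := congrFun (congrFun hCK i) j
  simp only [Matrix.mul_apply, Matrix.submatrix_apply, hKx, hKyx, Matrix.of_apply, id] at hij
  simp only [Pi.mul_apply, sub_mul, Finset.sum_mul, mul_assoc]
  have hmul' : Integrable (fun ω => y ω i * x ω (s j)) μ := (hyL i).integrable_mul (hxL (s j))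
  rw [integral_sub hmul'
    (integrable_finsetSum _ fun m _ => (hmul _ _).const_mul _),
    integral_finsetSum _ fun m _ => (hmul _ _).const_mul _]
  simp only [integral_const_mul]
  rw [hij, sub_self]

/-- Positive definiteness of `K_x` excludes a nontrivial almost sure linear relation among the
components of `x`. -/
lemma eq_zero_of_ae_eq_zero (hL : ∀ i, MemLp (fun ω => x ω i) 2 μ)
    (hKx : Kx = Matrix.of fun i j => ∫ ω, x ω i * x ω j ∂μ) (hKxPD : Kx.PosDef)
    (c : Fin ℓ → ℝ) (h : ∀ᵐ ω ∂μ, ∑ i, c i * x ω i = 0) : c = 0 := by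
  by_contra hc
  have hpos := hKxPD.dotProduct_mulVec_pos hc
  have hint : ∀ i j, Integrable (fun ω => x ω i * x ω j) μ := fun i j =>
    (hL i).integrable_mul (hL j)
  have : star c ⬝ᵥ (Kx *ᵥ c) = ∫ ω, ∑ i, c i * x ω i * (∑ j, c j * x ω j) ∂μ := by
    simp only [dotProduct, Matrix.mulVec, Pi.star_apply, star_trivial, hKx, Matrix.of_apply,
      Finset.mul_sum]
    have e : ∀ (ω : Ω) (i j : Fin ℓ),
        c i * x ω i * (c j * x ω j) = (c i * c j) * (x ω i * x ω j) := fun ω i j => by ring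
    simp only [e]
    rw [integral_finsetSum _ fun i _ => integrable_finsetSum _ fun j _ => (hint i j).const_mul _]
    refine Finset.sum_congr rfl fun i _ => ?_
    rw [integral_finsetSum _ fun j _ => (hint i j).const_mul _]
    refine Finset.sum_congr rfl fun j _ => ?_
    rw [integral_const_mul]; ring
  rw [this, integral_eq_zero_of_ae] at hpos
  · exact lt_irrefl _ hpos
  · filter_upwards [h] with ω hω
    simp [hω]

end Regression

/-- Causality is equivalent to lower triangularity of `K_{yx} K_x⁻¹`: for zero-mean jointly
Gaussian vectors `x, y` of length `ℓ` with `K_x` positive definite, the following are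
equivalent: (i) for every `k = 1,…,ℓ−1`, `(y₁,…,y_k)` is conditionally independent of
`(x_{k+1},…,x_ℓ)` given `(x₁,…,x_k)`; (ii) `K_{yx} K_x⁻¹` is lower triangular. -/
theorem causality_iff_lowerTriangular
    {Ω : Type*} [MeasurableSpace Ω] [StandardBorelSpace Ω]
    (μ : Measure Ω) [IsProbabilityMeasure μ]
    (ℓ : ℕ) (x y : Ω → Fin ℓ → ℝ)
    (hmx : Measurable x) (hmy : Measurable y)
    (hG : IsJointlyGaussianPair μ x y)
    (hx0 : ∀ i, ∫ ω, x ω i ∂μ = 0) (hy0 : ∀ i, ∫ ω, y ω i ∂μ = 0)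
    (Kx Kyx : Matrix (Fin ℓ) (Fin ℓ) ℝ)
    (hKx : Kx = Matrix.of fun i j => ∫ ω, x ω i * x ω j ∂μ)
    (hKyx : Kyx = Matrix.of fun i j => ∫ ω, y ω i * x ω j ∂μ)
    (hKxPD : Kx.PosDef) :
    (∀ (k : ℕ) (hk1 : 1 ≤ k) (hk : k < ℓ),
        CondIndepFun
          (MeasurableSpace.comap (fun ω (i : Fin k) => x ω (Fin.castLE hk.le i)) inferInstance)
          (measurable_iff_comap_le.mp
            (measurable_pi_iff.mpr fun i => (measurable_pi_apply _).comp hmx))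
          (fun ω (i : Fin k) => y ω (Fin.castLE hk.le i))
          (fun ω (i : Fin (ℓ - k)) => x ω ⟨k + i.1, by omega⟩) μ)
      ↔ ∀ j i : Fin ℓ, j < i → (Kyx * Kx⁻¹) j i = 0 := by
  have hxy := hG.hasGaussianLaw hmx hmy
  have hxL : ∀ i, MemLp (fun ω => x ω i) 2 μ := fun i => (hxy.fst.map_fun (.proj i)).memLp_two
  have hxi : ∀ i, Integrable (fun ω => x ω i) μ := fun i => (hxL i).integrable (by norm_num)
  have hyi : ∀ i, Integrable (fun ω => y ω i) μ := fun i =>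
    (hxy.snd.map_fun (.proj i)).integrable
  have hmxi : ∀ i, Measurable (fun ω => x ω i) := fun i => (measurable_pi_apply i).comp hmx
  have hmyi : ∀ i, Measurable (fun ω => y ω i) := fun i => (measurable_pi_apply i).comp hmy
  have hres := indepFun_residual hmx hmy hG hx0 hKx hKyx hKxPD id Function.injective_id
  simp only [Matrix.submatrix_id_id, id] at hres
  -- `glue` reassembles the full vector `x` from its first `k` and last `ℓ - k` components.
  let glue : (k : ℕ) → (Fin k → ℝ) × (Fin (ℓ - k) → ℝ) → Fin ℓ → ℝ := fun k p m =>
    if h : m.1 < k then p.1 ⟨m.1, h⟩ else p.2 ⟨m.1 - k, by omega⟩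
  have hglue : ∀ k, Measurable (glue k) := by
    intro k
    refine measurable_pi_iff.2 fun m => ?_
    by_cases h : m.1 < k
    · simp only [glue, h, dif_pos]; fun_prop
    · simp only [glue, h, dif_neg, not_false_eq_true]; fun_prop
  have hglue_x : ∀ (k : ℕ) (hk : k < ℓ) (ω : Ω), glue k (fun i => x ω (Fin.castLE hk.le i),
      fun i => x ω ⟨k + i.1, by omega⟩) = x ω := by
    intro k hk ω
    ext m
    by_cases h : m.1 < k
    · simp only [glue, h, dif_pos]; rfl
    · simp only [glue, h, dif_neg, not_false_eq_true]
      congr 1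
      ext
      simp only
      omega
  constructor
  · intro H j i hji
    have hk : j.1 + 1 < ℓ := by have := i.2; have := Fin.lt_def.1 hji; omega
    set s : Fin (j.1 + 1) → Fin ℓ := Fin.castLE hk.le with hs
    have hmk : Measurable (fun ω (i : Fin (j.1 + 1)) => x ω (s i)) :=
      measurable_pi_iff.2 fun m => hmxi _
    have hmg : Measurable (fun ω (i : Fin (ℓ - (j.1 + 1))) => x ω ⟨j.1 + 1 + i.1, by omega⟩) :=
      measurable_pi_iff.2 fun m => hmxi _
    have hci := (H (j.1 + 1) (by omega) hk).comp
      (measurable_pi_apply (⟨j.1, by omega⟩ : Fin (j.1 + 1))) measurable_id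
    have hce := condExp_prodMk_eq_of_condIndepFun hmk hmg (hmyi j) (hyi j) hci
    have hres' := indepFun_residual hmx hmy hG hx0 hKx hKyx hKxPD s (Fin.castLE_injective _)
    set C := Kyx.submatrix id s * (Kx.submatrix s s)⁻¹
    set A := Kyx * Kx⁻¹
    have hfull : μ[(fun ω => y ω j) | MeasurableSpace.comap
        (fun ω => ((fun m => x ω (s m) : Fin (j.1 + 1) → ℝ),
          (fun m => x ω ⟨j.1 + 1 + m.1, by omega⟩ : Fin (ℓ - (j.1 + 1)) → ℝ))) inferInstance]
        =ᵐ[μ] fun ω => ∑ m, A j m * x ω m := by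
      have := condExp_eq_of_indepFun (μ := μ) (f := fun ω => y ω j)
        (Z := fun ω => ((fun m => x ω (s m) : Fin (j.1 + 1) → ℝ),
          (fun m => x ω ⟨j.1 + 1 + m.1, by omega⟩ : Fin (ℓ - (j.1 + 1)) → ℝ)))
        (p := fun q => ∑ m, A j m * glue (j.1 + 1) q m) (hmyi j) (hyi j) (hmk.prodMk hmg)
        (Finset.measurable_sum _ fun m _ =>
          ((measurable_pi_apply m).comp (hglue _)).const_mul _)
      simp only [hs, hglue_x _ hk] at this
      refine this (integrable_finsetSum _ fun m _ => (hxi m).const_mul _) ?_ ?_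
      · rw [integral_sub (hyi j) (integrable_finsetSum _ fun m _ => (hxi m).const_mul _),
          integral_finsetSum _ fun m _ => (hxi m).const_mul _]
        simp [integral_const_mul, hx0, hy0]
      · exact hres.comp (measurable_pi_apply j)
          (ψ := fun v : Fin ℓ → ℝ => ((fun m => v (s m) : Fin (j.1 + 1) → ℝ),
            (fun m => v ⟨j.1 + 1 + m.1, by omega⟩ : Fin (ℓ - (j.1 + 1)) → ℝ))) (by fun_prop)
    have hpart : μ[(fun ω => y ω j) | MeasurableSpace.comap
        (fun ω (m : Fin (j.1 + 1)) => x ω (s m)) inferInstance]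
        =ᵐ[μ] fun ω => ∑ m, C j m * x ω (s m) := by
      refine condExp_eq_of_indepFun (μ := μ) (f := fun ω => y ω j)
        (Z := fun ω (m : Fin (j.1 + 1)) => x ω (s m))
        (p := fun q => ∑ m, C j m * q m) (hmyi j) (hyi j) hmk (by fun_prop)
        (integrable_finsetSum _ fun m _ => (hxi _).const_mul _) ?_ ?_
      · rw [integral_sub (hyi j) (integrable_finsetSum _ fun m _ => (hxi _).const_mul _),
          integral_finsetSum _ fun m _ => (hxi _).const_mul _]
        simp [integral_const_mul, hx0, hy0]
      · exact hres'.comp (measurable_pi_apply j) measurable_id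
    -- `d` is the row of `C` padded by zeros, so that both regressions are linear forms in `x`.
    let d : Fin ℓ → ℝ := fun m => if h : m.1 < j.1 + 1 then C j ⟨m.1, h⟩ else 0
    have hd : ∀ ω, ∑ m, d m * x ω m = ∑ m, C j m * x ω (s m) := by
      intro ω
      symm
      refine Finset.sum_of_injOn s (Fin.castLE_injective _).injOn (by simp) ?_ ?_
      · intro m _ hm
        have : ¬ m.1 < j.1 + 1 := fun h => hm ⟨⟨m.1, h⟩, by simp, rfl⟩
        simp only [d, this, dif_neg, not_false_eq_true, zero_mul]
      · intro m _
        have : (s m).1 < j.1 + 1 := m.2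
        simp only [d, this, dif_pos]
        rfl
    have hzero : (fun m => A j m - d m) = 0 := by
      refine eq_zero_of_ae_eq_zero hxL hKx hKxPD _ ?_
      filter_upwards [hce, hfull, hpart] with ω a b c
      simp only [sub_mul, Finset.sum_sub_distrib, hd]
      rw [← b, ← c, a, sub_self]
    have := congrFun hzero i
    have hi : ¬ i.1 < j.1 + 1 := by have := Fin.lt_def.1 hji; omega
    simpa only [d, hi, dif_neg, not_false_eq_true, sub_zero] using! this
  · intro H k hk1 hk
    set A := Kyx * Kx⁻¹
    have hmk : Measurable (fun ω (i : Fin k) => x ω (Fin.castLE hk.le i)) :=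
      measurable_pi_iff.2 fun m => hmxi _
    have hmg : Measurable (fun ω (i : Fin (ℓ - k)) => x ω ⟨k + i.1, by omega⟩) :=
      measurable_pi_iff.2 fun m => hmxi _
    have hme : Measurable (fun ω i => y ω i - ∑ m, A i m * x ω m) := by fun_prop
    -- Lower triangularity lets `φ` recover `y₁, …, y_k` from `x₁, …, x_k` and the residual.
    let φ : (Fin k → ℝ) × (Fin ℓ → ℝ) → Fin k → ℝ := fun p i =>
      p.2 (Fin.castLE hk.le i) + ∑ m, A (Fin.castLE hk.le i) (Fin.castLE hk.le m) * p.1 m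
    have hφ : Measurable φ := by fun_prop
    have key := condIndepFun_of_indepFun_prodMk hmk hmg hme hφ
      (hres.symm.comp (φ := fun v : Fin ℓ → ℝ => ((fun m => v (Fin.castLE hk.le m) : Fin k → ℝ),
            (fun m => v ⟨k + m.1, by omega⟩ : Fin (ℓ - k) → ℝ))) (by fun_prop) measurable_id)
    have hy : (fun ω => φ (fun i => x ω (Fin.castLE hk.le i), fun i => y ω i - ∑ m, A i m * x ω m))
        = fun ω (i : Fin k) => y ω (Fin.castLE hk.le i) := by
      ext ω i
      have : ∑ m, A (Fin.castLE hk.le i) (Fin.castLE hk.le m) * x ω (Fin.castLE hk.le m)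
          = ∑ m, A (Fin.castLE hk.le i) m * x ω m := by
        refine Finset.sum_of_injOn (Fin.castLE hk.le) (Fin.castLE_injective _).injOn (by simp) ?_
          fun _ _ => rfl
        intro m _ hm
        have : ¬ m.1 < k := fun h => hm ⟨⟨m.1, h⟩, by simp, rfl⟩
        rw [H _ m (by rw [Fin.lt_def]; have := i.2; simp only [Fin.val_castLE]; omega), zero_mul]
      simp only [φ, this, sub_add_cancel]
    rw [hy] at key
    exact key
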